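/- There exists exactly one stream x : Stream' ℕ satisfying x = (SCons 1 x) ⊗ (SCons 1 x), where ⊗ is the shuffle product (binomial convolution); moreover this unique stream is the stream of factorials starting at 1: x.get n = (n + 1)! for all n. -/

import Mathlib

open Stream'

/-- Shuffle product of streams (binomial convolution). -/
def sshuffle (xs ys : Stream' ℕ) : Stream' ℕ :=
  fun n => ∑ k ∈ Finset.range (n + 1), n.choose k * xs.get k * ys.get (n - k)

infixl:70 " ⊗ " => sshuffle

/-!
Since `n.choose k * k! * (n - k)! = n!`, the shuffle square of the stream `0!, 1!, 2!, …` is the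
tail of that stream, so this tail is a solution. It is the only one because the `n`-th entry of
`(Stream'.cons a x) ⊗ (Stream'.cons b x)` depends only on the first `n` entries of `x`.
-/

theorem get_sshuffle (xs ys : Stream' ℕ) (n : ℕ) :
    (xs ⊗ ys).get n = ∑ k ∈ Finset.range (n + 1), n.choose k * xs.get k * ys.get (n - k) :=
  rfl

theorem get_sshuffle_congr {xs xs' ys ys' : Stream' ℕ} {n : ℕ}
    (hxs : ∀ k ≤ n, xs.get k = xs'.get k) (hys : ∀ k ≤ n, ys.get k = ys'.get k) :
    (xs ⊗ ys).get n = (xs' ⊗ ys').get n := by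
  rw [get_sshuffle, get_sshuffle]
  refine Finset.sum_congr rfl fun k hk => ?_
  rw [hxs k (Finset.mem_range_succ_iff.mp hk), hys (n - k) (Nat.sub_le n k)]

theorem get_cons_congr {α : Type*} (a : α) {x y : Stream' α} {n : ℕ}
    (h : ∀ k < n, x.get k = y.get k) :
    ∀ k ≤ n, (Stream'.cons a x).get k = (Stream'.cons a y).get k
  | 0, _ => rfl
  | k + 1, hk => h k hk

theorem eq_of_eq_cons_sshuffle_cons {a b : ℕ} {x y : Stream' ℕ}
    (hx : x = (Stream'.cons a x) ⊗ (Stream'.cons b x))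
    (hy : y = (Stream'.cons a y) ⊗ (Stream'.cons b y)) : x = y := by
  refine Stream'.ext fun n => ?_
  induction n using Nat.strong_induction_on with
  | _ n ih =>
    rw [hx, hy]
    exact get_sshuffle_congr (get_cons_congr a ih) (get_cons_congr b ih)

/-- The stream `0!, 1!, 2!, …`; the solution of the fixed-point equation is its tail. -/
def factorials : Stream' ℕ :=
  Nat.factorial

theorem get_factorials (n : ℕ) : factorials.get n = n.factorial :=
  rfl

theorem cons_one_tail_factorials : Stream'.cons 1 factorials.tail = factorials :=
  Stream'.eta factorials

theorem factorials_sshuffle_factorials : factorials ⊗ factorials = factorials.tail := by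
  refine Stream'.ext fun n => ?_
  calc (factorials ⊗ factorials).get n
      = ∑ k ∈ Finset.range (n + 1), n.choose k * k.factorial * (n - k).factorial :=
        get_sshuffle factorials factorials n
    _ = ∑ _k ∈ Finset.range (n + 1), n.factorial :=
        Finset.sum_congr rfl fun _ hk =>
          Nat.choose_mul_factorial_mul_factorial (Finset.mem_range_succ_iff.mp hk)
    _ = (n + 1).factorial := by
        rw [Finset.sum_const, Finset.card_range, smul_eq_mul, Nat.factorial_succ]
    _ = factorials.tail.get n := by rw [Stream'.get_tail, get_factorials]

theorem stmt_12 :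
    (∃! x : Stream' ℕ, x = (Stream'.cons 1 x) ⊗ (Stream'.cons 1 x)) ∧
    (∀ x : Stream' ℕ, x = (Stream'.cons 1 x) ⊗ (Stream'.cons 1 x) →
      ∀ n, x.get n = Nat.factorial (n + 1)) := by
  have solution : factorials.tail =
      (Stream'.cons 1 factorials.tail) ⊗ (Stream'.cons 1 factorials.tail) := by
    rw [cons_one_tail_factorials, factorials_sshuffle_factorials]
  have unique (x : Stream' ℕ) (hx : x = (Stream'.cons 1 x) ⊗ (Stream'.cons 1 x)) :
      x = factorials.tail :=
    eq_of_eq_cons_sshuffle_cons hx solution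
  refine ⟨⟨factorials.tail, solution, unique⟩, fun x hx n => ?_⟩
  rw [unique x hx, Stream'.get_tail, get_factorials]
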